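/- Every monomially irreducible integer N with 2 ≤ N ≤ 17440 is either a prime number or belongs to {4, 6, 8, 12, 24}. -/

import Mathlib

namespace Monomial

/-- The elementary matrix `[[a, -1], [1, 0]]` over `ZMod N`. -/
def mat {N : ℕ} (a : ZMod N) : Matrix (Fin 2) (Fin 2) (ZMod N) := !![a, -1; 1, 0]

/-- `M [a₁, …, aₙ] = mat aₙ * ⋯ * mat a₁`. -/
def M {N : ℕ} (l : List (ZMod N)) : Matrix (Fin 2) (Fin 2) (ZMod N) :=
  (l.reverse.map mat).prod

/-- A tuple is a solution of (E_N) if the associated matrix is `±Id`. -/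
def IsSolution {N : ℕ} (l : List (ZMod N)) : Prop := M l = 1 ∨ M l = -1

/-- The sum `(a₁,…,aₙ) ⊕ (b₁,…,bₘ) = (a₁+bₘ, a₂,…,aₙ₋₁, aₙ+b₁, b₂,…,bₘ₋₁)`. -/
def osum {N : ℕ} (u v : List (ZMod N)) : List (ZMod N) :=
  (u.headI + v.getLastD 0) ::
    ((u.drop 1).dropLast ++ (u.getLastD 0 + v.headI) :: (v.drop 1).dropLast)

/-- Equivalence: `v` is a cyclic permutation of `u` or of the reversal of `u`. -/
def CyclicEquiv {N : ℕ} (u v : List (ZMod N)) : Prop :=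
  (∃ i, v = u.rotate i) ∨ (∃ i, v = u.reverse.rotate i)

/-- A tuple is reducible if, up to equivalence, it is a sum of an `m`-tuple (`m ≥ 3`)
with a solution of size `l ≥ 3`. -/
def Reducible {N : ℕ} (c : List (ZMod N)) : Prop :=
  ∃ a b : List (ZMod N), 3 ≤ a.length ∧ 3 ≤ b.length ∧ IsSolution b ∧
    CyclicEquiv c (osum a b)

/-- An irreducible solution: a solution which is not reducible (and `(0,0)` is
not considered irreducible). -/
def IrreducibleSol {N : ℕ} (c : List (ZMod N)) : Prop :=
  IsSolution c ∧ ¬ Reducible c ∧ c ≠ [0, 0]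

/-- The size of the `k`-monomial minimal solution of (E_N): the least `n > 0` such
that the constant `n`-tuple `(k, …, k)` is a solution. -/
noncomputable def monomialMinimalSize (N : ℕ) (k : ZMod N) : ℕ :=
  sInf {n | 0 < n ∧ IsSolution (List.replicate n k)}

/-- `N` is monomially irreducible if, for every `k ≠ 0`, the `k`-monomial minimal
solution of (E_N) is irreducible. -/
def MonomiallyIrreducible (N : ℕ) : Prop :=
  ∀ k : ZMod N, k ≠ 0 → IrreducibleSol (List.replicate (monomialMinimalSize N k) k)

/-- The continuant `Kₙ(x, …, x)` at a constant tuple: `K₀ = 1`, `K₁ = x`,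
`Kₙ₊₂ = x * Kₙ₊₁ - Kₙ`. -/
def K {N : ℕ} (x : ZMod N) : ℕ → ZMod N
  | 0 => 1
  | 1 => x
  | n + 2 => x * K x (n + 1) - K x n

/-!
Write `A = mat k` and `Sₙ` for the value at `k` of the rescaled Chebyshev polynomial `S n`, so that
`Aⁿ` has first column `(Sₙ, Sₙ₋₁)` and the constant `n`-tuple `k` is a solution iff `Aⁿ = ±1`.
If `Sᵣ = ±1`, the tuple `(x, k, …, k, x)` with `r` copies of `k` and `x = Sᵣ Sᵣ₋₁` is again a
solution, and it splits off every constant tuple of size at least `r + 3`. The sequence `S` is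
periodic or antiperiodic with period the minimal size `s`, so it suffices to find any integer `m`
with `Sₘ = ±1` and `Sₘ₋₁`, `Sₘ₊₁` nonzero: these conditions place `m` modulo `s` in
`{1, …, s - 3}`. Two choices of `k` then leave only the primes and the divisors of `24`.

* If `q² ∣ N` with `q ≥ 3`, take `k = N / q` and `m = 2`, using `k² = 0`.
* If `N = w d` with coprime factors `w, d > 1` and `d` prime to `6`, take `k` congruent to `1`
  modulo `w`, where `S` has period `6`, and to `2` modulo `d`, where `Sₙ = n + 1`, and take `m`
  congruent to `3` modulo `6` and to `-2` modulo `d`.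
-/

open Polynomial Polynomial.Chebyshev

section Chebyshev

variable {R R' : Type*} [CommRing R] [CommRing R']

theorem S_add (m n : ℤ) : S R (m + n) = S R m * S R n - S R (m - 1) * S R (n - 1) := by
  induction n using Polynomial.Chebyshev.induct with
  | zero => simp
  | one => simp [S_add_one, mul_comm]
  | add_two n ih₁ ih₀ =>
    have hmn := S_add_two R (m + n)
    have hn := S_add_two R n
    have hn' := S_add_one R n
    linear_combination (norm := ring_nf) hmn + X * ih₁ - ih₀ - S R m * hn + S R (m - 1) * hn'
  | neg_add_one n ih₀ ih₁ =>
    have hmn := S_sub_one R (m - n)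
    have hn := S_sub_one R (-n)
    have hn' := S_sub_two R (-n)
    linear_combination (norm := ring_nf) hmn + X * ih₀ - ih₁ - S R m * hn + S R (m - 1) * hn'

theorem map_eval_S (f : R →+* R') (x : R) (n : ℤ) :
    f ((S R n).eval x) = (S R' n).eval (f x) := by
  rw [← map_S f, eval_map_apply]

theorem eval_S_add_one (x : R) (n : ℤ) :
    (S R (n + 1)).eval x = x * (S R n).eval x - (S R (n - 1)).eval x := by
  simp [S_add_one]

theorem eval_S_prod (x : R × R') (n : ℤ) :
    (S (R × R') n).eval x = ((S R n).eval x.1, (S R' n).eval x.2) :=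
  Prod.ext (map_eval_S (RingHom.fst R R') x n) (map_eval_S (RingHom.snd R R') x n)

theorem equiv_eval_S_symm_mk {A : Type*} [CommRing A] (e : A ≃+* R × R') (x : R) (y : R')
    (n : ℤ) : e ((S A n).eval (e.symm (x, y))) = ((S R n).eval x, (S R' n).eval y) := by
  rw [← RingEquiv.coe_toRingHom, map_eval_S, RingEquiv.coe_toRingHom, e.apply_symm_apply,
    eval_S_prod]

theorem eval_one_S_antiperiodic : Function.Antiperiodic (fun n ↦ (S R n).eval 1) 3 := by
  intro n
  have h₂ := eval_S_add_one (1 : R) (n + 1)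
  have h₃ := eval_S_add_one (1 : R) (n + 2)
  linear_combination (norm := ring_nf) h₂ + h₃

theorem eval_one_S_periodic : Function.Periodic (fun n ↦ (S R n).eval 1) 6 :=
  (eval_one_S_antiperiodic (R := R)).periodic_two_mul

theorem eval_one_S_three : (S R 3).eval 1 = -1 := by
  simpa using eval_one_S_antiperiodic (R := R) 0

theorem eval_one_S_four : (S R 4).eval 1 = -1 := by
  simpa using eval_one_S_antiperiodic (R := R) 1

end Chebyshev

section Reducibility

variable {N : ℕ} {k : ZMod N}

theorem M_replicate (k : ZMod N) (n : ℕ) : M (List.replicate n k) = mat k ^ n := by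
  simp [M]

theorem mat_pow (k : ZMod N) (n : ℕ) :
    mat k ^ n = !![(S (ZMod N) n).eval k, -(S (ZMod N) (n - 1)).eval k;
      (S (ZMod N) (n - 1)).eval k, -(S (ZMod N) (n - 2)).eval k] := by
  induction n with
  | zero => simp [Matrix.one_fin_two]
  | succ n ih =>
    have h := eval_S_add_one k (n - 1)
    rw [sub_add_cancel, sub_sub, one_add_one_eq_two] at h
    rw [pow_succ', ih, mat, Matrix.mul_fin_two, Nat.cast_succ, eval_S_add_one,
      add_sub_cancel_right, show (n : ℤ) + 1 - 2 = n - 1 by ring, h]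
    simp [neg_add_eq_sub, ← sub_eq_add_neg]

theorem det_mat (k : ZMod N) : (mat k).det = 1 := by
  simp [mat, Matrix.det_fin_two]

theorem exists_isSolution_replicate [NeZero N] (k : ZMod N) :
    ∃ n, 0 < n ∧ IsSolution (List.replicate n k) := by
  obtain ⟨u, hu⟩ : IsUnit (mat k) := by simp [Matrix.isUnit_iff_isUnit_det, det_mat]
  refine ⟨orderOf u, orderOf_pos u, Or.inl ?_⟩
  rw [M_replicate, ← hu, ← Units.val_pow_eq_pow_val, pow_orderOf_eq_one, Units.val_one]

theorem monomialMinimalSize_pos [NeZero N] (k : ZMod N) : 0 < monomialMinimalSize N k :=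
  (Nat.sInf_mem (exists_isSolution_replicate k)).1

theorem isSolution_replicate_iff {n : ℕ} : IsSolution (List.replicate n k) ↔
    ((S (ZMod N) n).eval k = 1 ∨ (S (ZMod N) n).eval k = -1) ∧
      (S (ZMod N) (n - 1)).eval k = 0 := by
  have h := eval_S_add_one k (n - 1)
  rw [sub_add_cancel, sub_sub, one_add_one_eq_two] at h
  simp only [IsSolution, M_replicate, mat_pow, ← Matrix.ext_iff, Fin.forall_fin_two]
  simp only [Matrix.of_apply, Matrix.cons_val', Matrix.cons_val_zero, Matrix.cons_val_one,
    Matrix.cons_val_fin_one, Matrix.one_apply, Matrix.neg_apply]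
  grind

theorem eval_S_add_int_mul {s : ℕ} (hs : IsSolution (List.replicate s k)) (n q : ℤ) :
    (S (ZMod N) (n + q * s)).eval k = (S (ZMod N) n).eval k ∨
      (S (ZMod N) (n + q * s)).eval k = -(S (ZMod N) n).eval k := by
  obtain ⟨hs₀, hs₁⟩ := isSolution_replicate_iff.1 hs
  have hadd (j : ℤ) :
      (S (ZMod N) (j + s)).eval k = (S (ZMod N) j).eval k * (S (ZMod N) s).eval k := by
    simp [S_add, hs₁]
  rcases hs₀ with hs₀ | hs₀
  · have hper : Function.Periodic (fun j ↦ (S (ZMod N) j).eval k) s := fun j ↦ by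
      simp only [hadd, hs₀, mul_one]
    exact Or.inl (hper.int_mul q n)
  · have hanti : Function.Antiperiodic (fun j ↦ (S (ZMod N) j).eval k) s := fun j ↦ by
      simp only [hadd, hs₀, mul_neg_one]
    have := hanti.add_int_mul_eq q (x := n)
    rcases Int.even_or_odd q with hq | hq
    · left
      simpa [Int.negOnePow_even q hq] using this
    · right
      simpa [Int.negOnePow_odd q hq] using this

theorem isSolution_cons_replicate_append {r : ℕ} {x : ZMod N}
    (hr : (S (ZMod N) r).eval k = 1 ∨ (S (ZMod N) r).eval k = -1)
    (hx : x = (S (ZMod N) r).eval k * (S (ZMod N) (r - 1)).eval k) :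
    IsSolution (x :: (List.replicate r k ++ [x])) := by
  have hM : M (x :: (List.replicate r k ++ [x])) = mat x * mat k ^ r * mat x := by
    simp [M, mul_assoc]
  have hdet : (mat k ^ r).det = 1 := by rw [Matrix.det_pow, det_mat, one_pow]
  rw [mat_pow, Matrix.det_fin_two_of] at hdet
  rw [mat_pow, mat, Matrix.mul_fin_two, Matrix.mul_fin_two] at hM
  set p := (S (ZMod N) r).eval k
  set q := (S (ZMod N) (r - 1)).eval k
  have hp : p ^ 2 = 1 := by rcases hr with hr | hr <;> simp [hr]
  have hMp : M (x :: (List.replicate r k ++ [x])) = !![-p, 0; 0, -p] := by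
    rw [hM]
    congr! 3 <;> grind
  rcases hr with hr | hr
  · right
    simp [hMp, hr, Matrix.one_fin_two]
  · left
    simp [hMp, hr, Matrix.one_fin_two]

theorem osum_cons_append (a b c d : ZMod N) (u v : List (ZMod N)) :
    osum (a :: (u ++ [b])) (c :: (v ++ [d])) = (a + d) :: (u ++ (b + c) :: v) := by
  have hlast (y z : ZMod N) (l : List (ZMod N)) : (y :: (l ++ [z])).getLastD 0 = z := by
    rw [← List.cons_append, List.getLastD_concat]
  simp only [osum, hlast]
  simp

theorem reducible_replicate {r s : ℕ} (hr₁ : 1 ≤ r) (hrs : r + 3 ≤ s)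
    (hr : (S (ZMod N) r).eval k = 1 ∨ (S (ZMod N) r).eval k = -1) :
    Reducible (List.replicate s k) := by
  obtain ⟨t, rfl⟩ := Nat.exists_eq_add_of_le hrs
  set x := (S (ZMod N) r).eval k * (S (ZMod N) (r - 1)).eval k with hx
  refine ⟨(k - x) :: (List.replicate (t + 1) k ++ [k - x]), x :: (List.replicate r k ++ [x]),
    by simp, by simpa using hr₁, isSolution_cons_replicate_append hr hx, Or.inl ⟨0, ?_⟩⟩
  rw [List.rotate_zero, osum_cons_append, sub_add_cancel, List.eq_replicate_iff]
  constructor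
  · simp
    omega
  · simp +contextual [or_imp]

theorem reducible_of_isSolution_replicate {s : ℕ} (hs₀ : 0 < s)
    (hs : IsSolution (List.replicate s k)) {m : ℤ}
    (hm : (S (ZMod N) m).eval k = 1 ∨ (S (ZMod N) m).eval k = -1)
    (hpred : (S (ZMod N) (m - 1)).eval k ≠ 0) (hsucc : (S (ZMod N) (m + 1)).eval k ≠ 0) :
    Reducible (List.replicate s k) := by
  obtain ⟨hs₁, hs₂⟩ := isSolution_replicate_iff.1 hs
  have : Nontrivial (ZMod N) := nontrivial_of_ne _ _ hpred
  obtain ⟨r, hr⟩ := Int.eq_ofNat_of_zero_le (Int.emod_nonneg m (by omega : (s : ℤ) ≠ 0))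
  have hrs : r < s := by
    have := Int.emod_lt_of_pos m (by omega : (0 : ℤ) < s)
    omega
  have hshift (i : ℤ) : (S (ZMod N) (m + i)).eval k = (S (ZMod N) (r + i)).eval k ∨
      (S (ZMod N) (m + i)).eval k = -(S (ZMod N) (r + i)).eval k := by
    have hmr : m + i = r + i + m / s * s := by linarith [Int.emod_add_mul_ediv m s]
    rw [hmr]
    exact eval_S_add_int_mul hs (r + i) (m / s)
  have hSr : (S (ZMod N) r).eval k = 1 ∨ (S (ZMod N) r).eval k = -1 := by
    have := hshift 0
    grind
  have hr_pred : (S (ZMod N) (r - 1)).eval k ≠ 0 := by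
    have := hshift (-1)
    grind
  have hr_succ : (S (ZMod N) (r + 1)).eval k ≠ 0 := by
    have := hshift 1
    grind
  have hr₀ : r ≠ 0 := by
    rintro rfl
    simp at hr_pred
  have hr₁ : r + 1 ≠ s := by
    rintro rfl
    rw [Nat.cast_succ, add_sub_cancel_right] at hs₂
    simp [hs₂] at hSr
  have hr₂ : r + 2 ≠ s := by
    rintro rfl
    rw [Nat.cast_add, Nat.cast_two, add_sub_assoc] at hs₂
    exact hr_succ hs₂
  exact reducible_replicate (by omega) (by omega) hSr

theorem not_monomiallyIrreducible_of_eval_S [NeZero N] (hk : k ≠ 0) {m : ℤ}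
    (hm : (S (ZMod N) m).eval k = 1 ∨ (S (ZMod N) m).eval k = -1)
    (hpred : (S (ZMod N) (m - 1)).eval k ≠ 0) (hsucc : (S (ZMod N) (m + 1)).eval k ≠ 0) :
    ¬ MonomiallyIrreducible N := by
  intro hN
  obtain ⟨hsol, hirr, -⟩ := hN k hk
  exact hirr (reducible_of_isSolution_replicate (monomialMinimalSize_pos k) hsol hm hpred hsucc)

end Reducibility

theorem not_monomiallyIrreducible_of_sq_eq_zero {N : ℕ} [NeZero N] {k : ZMod N} (hk : k ^ 2 = 0)
    (hk₂ : 2 * k ≠ 0) : ¬ MonomiallyIrreducible N := by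
  have hk₀ : k ≠ 0 := right_ne_zero_of_mul hk₂
  have hS₂ : (S (ZMod N) 2).eval k = -1 := by simp [S_two, hk]
  have hS₃ : (S (ZMod N) (2 + 1)).eval k = -(2 * k) := by
    rw [eval_S_add_one, hS₂, show (2 : ℤ) - 1 = 1 by norm_num, S_one, eval_X]
    ring
  exact not_monomiallyIrreducible_of_eval_S hk₀ (m := 2) (Or.inr hS₂) (by simpa using hk₀)
    (by rwa [hS₃, neg_ne_zero])

theorem not_monomiallyIrreducible_of_sq_dvd {N q : ℕ} [NeZero N] (hq : 3 ≤ q) (hqN : q ^ 2 ∣ N) :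
    ¬ MonomiallyIrreducible N := by
  obtain ⟨t, rfl⟩ := hqN
  have ht : 0 < t := Nat.pos_of_ne_zero (right_ne_zero_of_mul (NeZero.ne (q ^ 2 * t)))
  apply not_monomiallyIrreducible_of_sq_eq_zero (k := ((q * t : ℕ) : ZMod (q ^ 2 * t)))
  · rw [← Nat.cast_pow, ZMod.natCast_eq_zero_iff]
    exact ⟨t, by ring⟩
  · have hlt : 2 * (q * t) < q ^ 2 * t := by nlinarith [Nat.mul_lt_mul_of_pos_right hq ht]
    have h := Nat.not_dvd_of_pos_of_lt (by positivity) hlt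
    rwa [← ZMod.natCast_eq_zero_iff, Nat.cast_mul 2, Nat.cast_ofNat] at h

theorem not_monomiallyIrreducible_mul {w d : ℕ} (hw : 1 < w) (hd : 1 < d) (hwd : w.Coprime d)
    (hd₆ : d.Coprime 6) : ¬ MonomiallyIrreducible (w * d) := by
  have : Fact (1 < w) := ⟨hw⟩
  have : Fact (1 < d) := ⟨hd⟩
  have : NeZero (w * d) := ⟨by positivity⟩
  have h₂ : IsUnit (2 : ZMod d) :=
    (ZMod.isUnit_iff_coprime 2 d).2 (hd₆.coprime_dvd_right (by norm_num)).symm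
  have h₆ : IsUnit (6 : ZMod d) := (ZMod.isUnit_iff_coprime 6 d).2 hd₆.symm
  obtain ⟨c, hc⟩ := h₆.dvd (a := (-5 : ZMod d))
  obtain ⟨q, rfl⟩ := ZMod.intCast_surjective c
  have hm : (3 + q * 6 : ZMod d) = -2 := by linear_combination -hc
  let e := ZMod.chineseRemainder hwd
  have hS (i : ℤ) : e ((S (ZMod (w * d)) (3 + q * 6 + i)).eval (e.symm (1, 2))) =
      ((S (ZMod w) (3 + i)).eval 1, (i - 1 : ZMod d)) := by
    have hper := (eval_one_S_periodic (R := ZMod w)).int_mul q (3 + i)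
    rw [Int.cast_id, add_right_comm] at hper
    rw [equiv_eval_S_symm_mk, S_eval_two, hper]
    push_cast
    rw [hm]
    ring_nf
  refine not_monomiallyIrreducible_of_eval_S (k := e.symm (1, 2)) (m := 3 + q * 6)
    (by simp) (Or.inr (e.injective ?_)) (fun h ↦ ?_) (fun h ↦ ?_)
  · rw [← add_zero (3 + q * 6), hS, add_zero, eval_one_S_three, Int.cast_zero, zero_sub, map_neg,
      map_one]
    rfl
  · rw [sub_eq_add_neg, ← e.map_eq_zero_iff, hS, Prod.mk_eq_zero] at h
    refine h₂.ne_zero ?_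
    linear_combination (norm := (push_cast; ring)) -h.2
  · rw [← e.map_eq_zero_iff, hS, Prod.mk_eq_zero, three_add_one_eq_four, eval_one_S_four] at h
    exact neg_ne_zero.2 one_ne_zero h.1

theorem dvd_twenty_four {N : ℕ} (hprime : ∀ p, p.Prime → p ∣ N → p < 5) (h₁₆ : ¬ 4 ^ 2 ∣ N)
    (h₉ : ¬ 3 ^ 2 ∣ N) : N ∣ 24 := by
  rw [Nat.dvd_iff_prime_pow_dvd_dvd]
  intro p e hp hpe
  rcases Nat.eq_zero_or_pos e with rfl | he
  · simp
  have hp₅ : p < 5 := hprime p hp ((dvd_pow_self p he.ne').trans hpe)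
  interval_cases p
  · exact absurd hp Nat.not_prime_zero
  · exact absurd hp Nat.not_prime_one
  · have he₄ : e < 4 := by
      by_contra! h
      exact h₁₆ ((pow_dvd_pow 2 h).trans hpe)
    exact (pow_dvd_pow 2 (Nat.le_of_lt_succ he₄)).trans (by norm_num)
  · have he₂ : e < 2 := by
      by_contra! h
      exact h₉ ((pow_dvd_pow 3 h).trans hpe)
    exact (pow_dvd_pow 3 (Nat.le_of_lt_succ he₂)).trans (by norm_num)
  · norm_num at hp

theorem prime_or_dvd_twenty_four {N : ℕ} (hN₂ : 2 ≤ N) (hN : MonomiallyIrreducible N) :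
    N.Prime ∨ N ∣ 24 := by
  have : NeZero N := ⟨by omega⟩
  have hsq {q : ℕ} (hq : 3 ≤ q) : ¬ q ^ 2 ∣ N := fun hqN ↦
    not_monomiallyIrreducible_of_sq_dvd hq hqN hN
  by_cases h : ∀ p, p.Prime → p ∣ N → p < 5
  · exact Or.inr (dvd_twenty_four h (hsq (by norm_num)) (hsq le_rfl))
  left
  push Not at h
  obtain ⟨p, hp, ⟨w, rfl⟩, hp₅⟩ := h
  have hpw : w.Coprime p := by
    rw [Nat.coprime_comm, hp.coprime_iff_not_dvd]
    intro hpw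
    exact hsq (by omega) (sq p ▸ mul_dvd_mul_left p hpw)
  have hp₆ : p.Coprime 6 := by
    rw [hp.coprime_iff_not_dvd]
    intro hdvd
    have : p ≤ 6 := Nat.le_of_dvd (by norm_num) hdvd
    interval_cases p <;> revert hp hdvd <;> decide
  have hw : ¬ 1 < w := fun hw ↦
    not_monomiallyIrreducible_mul hw hp.one_lt hpw hp₆ (mul_comm p w ▸ hN)
  obtain rfl : w = 1 := by
    have : w ≠ 0 := by rintro rfl; simp at hN₂
    omega
  rwa [mul_one]

theorem stmt19_general (N : ℕ) (h2 : 2 ≤ N) (hmi : MonomiallyIrreducible N) :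
    N.Prime ∨ N ∈ ({4, 6, 8, 12, 24} : Set ℕ) := by
  refine (prime_or_dvd_twenty_four h2 hmi).elim Or.inl fun hN ↦ ?_
  have hdiv : N ∈ Nat.divisors 24 := by simpa using hN
  have hdivs : Nat.divisors 24 = {1, 2, 3, 4, 6, 8, 12, 24} := by decide
  rw [hdivs] at hdiv
  fin_cases hdiv
  · exact absurd h2 (by norm_num)
  · exact Or.inl Nat.prime_two
  · exact Or.inl Nat.prime_three
  all_goals exact Or.inr (by simp)

theorem stmt19 (N : ℕ) (h2 : 2 ≤ N) (h : N ≤ 17440)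
    (hmi : MonomiallyIrreducible N) :
    N.Prime ∨ N ∈ ({4, 6, 8, 12, 24} : Set ℕ) :=
  stmt19_general N h2 hmi

end Monomial
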